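/- arXiv:2311.06662 — 4 statements merged into one kernel-verified Lean document; each statement's English description precedes it below -/
import Mathlib

section
/- Consider the circular permutation α = (1,2,…,m) for some m ≥ 2 and let β be a refinement of α satisfying β(1) = k. Define β′ = β if k = 1 and β′ = (1,k)β otherwise. Then β′ is a refinement of the permutation (1)(2,3,…,m). Furthermore, if k ∉ {1,2}, then β′ is also a refinement of the permutation (1)(2,…,k−1)(k,k+1,…,m). -/
/-!
The number of cycles of a permutation `π` is the dimension of the space of `π`-invariant
rational functions, and the proof is linear algebra on these spaces.

If `α = β * δ`, a function invariant under `β` and `δ` is invariant under `α`, so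
`dim (A ⊓ B) + dim (A ⊔ B) = dim A + dim B` gives the inequality
`z(β) + z(δ) ≤ n + z(α)` (`invFun_mul_finrank`). If equality holds, then `A ⊔ B` is everything and
`A ⊓ B` is the whole space of `α`-invariant functions. Hence `α`-invariant functions are
`β`-invariant, which makes the cycles of `α` stable under `β`; and cutting functions down to one
cycle of `α` localizes both facts, which yields the genus-zero condition on each cycle. So `β` is a
refinement of `α` as soon as `n + z(α) ≤ z(β) + z(β⁻¹ * α)` (`isRefinement_of_le`).

It remains to count cycles. Multiplying by a transposition lowers `z` by at most one
(`finrank_le_swap_mul`), and multiplying `π` by the transposition exchanging `x` and `π x ≠ x`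
splits off the fixed point `x` and raises `z` (`finrank_lt_swap_apply_mul`). Numbering the points
from `0` and writing `k = β 0`, the permutation with cycles `(0)` and `(1,…,m-1)` is
`α' = swap 0 1 * α`, and the one with cycles `(0)`, `(1,…,k-1)`, `(k,…,m-1)` is `swap 1 k * α'`
(`formPerm_append_cons`). Each permutation whose cycles must be counted is therefore obtained from
`β`, `α` or `β⁻¹ * α` by such multiplications.
-/

open scoped Classical

namespace Hypermap

variable {γ : Type*} [Fintype γ] [DecidableEq γ]

/-- The number of cycles of a permutation, counting fixed points as cycles. -/
noncomputable def zc (π : Equiv.Perm γ) : ℕ :=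
  Nat.card (MulAction.orbitRel.Quotient (Subgroup.zpowers π) γ)

/-- The number of connected components of the collection of hypermaps `(σ, α)`. -/
noncomputable def kappa (σ α : Equiv.Perm γ) : ℕ :=
  Nat.card (MulAction.orbitRel.Quotient
    (Subgroup.closure ({σ, α} : Set (Equiv.Perm γ))) γ)

/-- The support of the cycle of `π` containing `x`. -/
def cycleSet (π : Equiv.Perm γ) (x : γ) : Set γ := {y | π.SameCycle x y}

/-- The number of cycles of `π` meeting the set `S` (for invariant `S`,
the number of cycles of the restriction of `π` to `S`). -/
noncomputable def zcOn (π : Equiv.Perm γ) (S : Set γ) : ℕ :=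
  (S.image fun x =>
    Quotient.mk (MulAction.orbitRel (Subgroup.zpowers π) γ) x).ncard

/-- `β` is a refinement of `α`: the support of every cycle of `α` is
`β`-invariant, and on the support `S` of each cycle of `α` the restriction
`βᵢ` of `β` satisfies the genus-zero condition `|S| + 1 = z(βᵢ) + z(βᵢ⁻¹αᵢ)`. -/
def IsRefinement (β α : Equiv.Perm γ) : Prop :=
  (∀ x, α.SameCycle x (β x)) ∧
  ∀ x, Nat.card (cycleSet α x) + 1 =
    zcOn β (cycleSet α x) + zcOn (β⁻¹ * α) (cycleSet α x)

/-- The Whitney polynomial of a collection of hypermaps. -/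
noncomputable def whitney {A : Type*} [CommRing A] (σ α : Equiv.Perm γ) (u v : A) : A :=
  ∑ β ∈ Finset.univ.filter (fun β => IsRefinement β α),
    u ^ (kappa σ β - kappa σ α) *
      v ^ (kappa σ β + Fintype.card γ - zc β - zc σ)

end Hypermap

namespace Hypermap

/-! ### Cutting a cycle in two -/

/-- Multiplying the cycle `(a l₁ b l₂)` by the transposition of `a` and `b` cuts it into the cycles
`(a l₁)` and `(b l₂)`. -/
theorem formPerm_append_cons {V : Type*} [DecidableEq V] (a b : V) (l₁ l₂ : List V)
    (h : (a :: l₁ ++ b :: l₂).Nodup) :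
    (a :: l₁ ++ b :: l₂).formPerm =
      Equiv.swap a b * ((a :: l₁).formPerm * (b :: l₂).formPerm) := by
  induction l₁ generalizing a with
  | nil => simp
  | cons c l ih =>
    have hc : (c :: l ++ b :: l₂).Nodup := by
      rw [List.cons_append] at h
      exact (List.nodup_cons.1 h).2
    have hab : a ≠ b := by rintro rfl; simp at h
    have hcb : c ≠ b := by rintro rfl; simp at hc
    have hsw : Equiv.swap a c * Equiv.swap c b = Equiv.swap a b * Equiv.swap a c := by
      rw [Equiv.mul_swap_eq_swap_mul]
      simp [Equiv.swap_apply_of_ne_of_ne hab.symm hcb.symm]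
    have h1 : (a :: c :: l ++ b :: l₂).formPerm =
        Equiv.swap a c * (c :: l ++ b :: l₂).formPerm := by simp
    rw [h1, ih c hc, List.formPerm_cons_cons, ← mul_assoc, hsw]
    simp only [mul_assoc]

/-! ### Invariant functions -/

/-- The space of rational functions that are invariant under `π` and vanish outside `S`. -/
def invFun {V : Type*} (π : Equiv.Perm V) (S : Set V) : Submodule ℚ (V → ℚ) where
  carrier := {f | (∀ x, f (π x) = f x) ∧ ∀ x, x ∉ S → f x = 0}
  add_mem' := by
    rintro f g ⟨hf, hf'⟩ ⟨hg, hg'⟩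
    exact ⟨fun x => by simp [hf, hg], fun x hx => by simp [hf' x hx, hg' x hx]⟩
  zero_mem' := by simp
  smul_mem' := by
    rintro c f ⟨hf, hf'⟩
    exact ⟨fun x => by simp [hf], fun x hx => by simp [hf' x hx]⟩

section

variable {V : Type*}

theorem orbitRel_zpowers {π : Equiv.Perm V} {x y : V} :
    (MulAction.orbitRel (Subgroup.zpowers π) V) x y ↔ π.SameCycle x y := by
  rw [MulAction.orbitRel_apply, MulAction.mem_orbit_iff, Equiv.Perm.sameCycle_comm]
  constructor
  · rintro ⟨⟨_, n, rfl⟩, h⟩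
    exact ⟨n, h⟩
  · rintro ⟨n, h⟩
    exact ⟨⟨π ^ n, n, rfl⟩, h⟩

/-- A function with `f ∘ π = f` is constant on the cycles of `π`. -/
theorem apply_eq_of_sameCycle {X : Type*} {π : Equiv.Perm V} {f : V → X}
    (hf : ∀ x, f (π x) = f x) {x y : V} (h : π.SameCycle x y) : f y = f x := by
  obtain ⟨n, rfl⟩ := h
  induction n using Int.induction_on with
  | zero => simp
  | succ n ih => rw [add_comm, zpow_add, zpow_one, Equiv.Perm.mul_apply, hf, ih]
  | pred n ih =>
    rw [← ih, ← hf ((π ^ (-(n : ℤ) - 1)) x), ← Equiv.Perm.mul_apply, ← zpow_one_add]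
    congr 3
    ring

theorem invFun_le_one (π : Equiv.Perm V) (S : Set V) : invFun π S ≤ invFun 1 S :=
  fun _ hf => ⟨fun _ => rfl, hf.2⟩

theorem invFun_inf_le (β δ : Equiv.Perm V) (S : Set V) :
    invFun β S ⊓ invFun δ S ≤ invFun (β * δ) S :=
  fun f hf => ⟨fun x => by rw [Equiv.Perm.mul_apply, hf.1.1, hf.2.1], hf.1.2⟩

theorem indicator_mem_invFun {π : Equiv.Perm V} {S : Set V} (hS : ∀ x, π x ∈ S ↔ x ∈ S)
    {f : V → ℚ} (hf : f ∈ invFun π Set.univ) : S.indicator f ∈ invFun π S := by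
  refine ⟨fun x => ?_, fun x hx => Set.indicator_of_notMem hx f⟩
  simp only [Set.indicator_apply, hS, hf.1]

variable [Fintype V]

/-! ### Cycle counts as dimensions -/

/-- Cycles of `π` inside an invariant set are counted by the dimension of the space of invariant
functions supported there. -/
theorem finrank_invFun {π : Equiv.Perm V} {S : Set V} (hS : ∀ x, π x ∈ S ↔ x ∈ S) :
    Module.finrank ℚ (invFun π S) = zcOn π S := by
  set q : V → Quotient (MulAction.orbitRel (Subgroup.zpowers π) V) :=
    fun x => Quotient.mk (MulAction.orbitRel (Subgroup.zpowers π) V) x with hq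
  have hqe : ∀ x y, q x = q y ↔ π.SameCycle x y := fun x y =>
    (Quotient.eq (r := MulAction.orbitRel (Subgroup.zpowers π) V)).trans orbitRel_zpowers
  have hmem : ∀ x, q x ∈ q '' S ↔ x ∈ S := by
    intro x
    refine ⟨?_, fun h => ⟨x, h, rfl⟩⟩
    rintro ⟨y, hy, hxy⟩
    have := apply_eq_of_sameCycle (f := fun z => z ∈ S) (fun z => propext (hS z))
      ((hqe y x).1 hxy)
    exact this.symm ▸ hy
  have hqπ : ∀ x, q (π x) = q x := fun x =>
    (hqe _ _).2 (Equiv.Perm.sameCycle_apply_left.2 (Equiv.Perm.SameCycle.refl _ _))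
  let e : invFun π S ≃ₗ[ℚ] (q '' S → ℚ) :=
    { toFun := fun f t => f.1 t.1.out
      map_add' := fun _ _ => rfl
      map_smul' := fun _ _ => rfl
      invFun := fun g => ⟨fun x => if h : q x ∈ q '' S then g ⟨q x, h⟩ else 0, by
        refine ⟨fun x => ?_, fun x hx => ?_⟩
        · simp only [hqπ]
        · exact dif_neg (fun h => hx ((hmem x).1 h))⟩
      left_inv := by
        intro f
        ext x
        by_cases h : q x ∈ q '' S
        · simp only [h, dite_true]
          exact apply_eq_of_sameCycle f.2.1 ((hqe _ _).1 (Quotient.out_eq (q x)).symm)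
        · simp only [h, dite_false]
          exact (f.2.2 x (fun hx => h ((hmem x).2 hx))).symm
      right_inv := by
        intro g
        ext t
        have ht : q t.1.out = t.1 := Quotient.out_eq t.1
        simp only [ht, t.2, dite_true] }
  rw [e.finrank_eq, Module.finrank_fintype_fun_eq_card, zcOn, ← Nat.card_eq_fintype_card,
    Nat.card_coe_set_eq]

theorem finrank_invFun_one (S : Set V) :
    Module.finrank ℚ (invFun (1 : Equiv.Perm V) S) = Nat.card S := by
  rw [finrank_invFun (by simp), zcOn, Set.ncard_image_of_injective, Nat.card_coe_set_eq]
  intro x y h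
  have := orbitRel_zpowers.1 (Quotient.exact h)
  simpa using this

theorem finrank_invFun_eq_one {π : Equiv.Perm V} {S : Set V} (hS : ∀ x, π x ∈ S ↔ x ∈ S)
    {x : V} (hx : x ∈ S) (h : ∀ y ∈ S, π.SameCycle x y) :
    Module.finrank ℚ (invFun π S) = 1 := by
  rw [finrank_invFun hS, zcOn, Set.ncard_eq_one]
  refine ⟨Quotient.mk (MulAction.orbitRel (Subgroup.zpowers π) V) x, ?_⟩
  ext t
  constructor
  · rintro ⟨y, hy, rfl⟩
    exact Quotient.sound (orbitRel_zpowers.2 (h y hy).symm)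
  · rintro rfl
    exact ⟨x, hx, rfl⟩

/-! ### The triangle inequality and its equality case -/

theorem invFun_mul_finrank (β δ : Equiv.Perm V) (S : Set V) :
    Module.finrank ℚ (invFun β S) + Module.finrank ℚ (invFun δ S) ≤
      Module.finrank ℚ (invFun (1 : Equiv.Perm V) S) +
        Module.finrank ℚ (invFun (β * δ) S) := by
  rw [← Submodule.finrank_sup_add_finrank_inf_eq]
  exact add_le_add
    (Submodule.finrank_mono (sup_le (invFun_le_one β S) (invFun_le_one δ S)))
    (Submodule.finrank_mono (invFun_inf_le β δ S))

/-- Equality in `z(β) + z(δ) ≤ n + z(β * δ)` forces the invariant functions of `β` and `δ` to span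
everything and to have the invariant functions of `β * δ` as their intersection. -/
theorem invFun_extremal {β δ : Equiv.Perm V} {S : Set V}
    (h : Module.finrank ℚ (invFun (1 : Equiv.Perm V) S) +
        Module.finrank ℚ (invFun (β * δ) S) ≤
      Module.finrank ℚ (invFun β S) + Module.finrank ℚ (invFun δ S)) :
    invFun β S ⊔ invFun δ S = invFun 1 S ∧
      invFun β S ⊓ invFun δ S = invFun (β * δ) S := by
  rw [← Submodule.finrank_sup_add_finrank_inf_eq (invFun β S)] at h
  have hs := sup_le (invFun_le_one β S) (invFun_le_one δ S)
  have hi := invFun_inf_le β δ S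
  have h1 := Submodule.finrank_mono hs
  have h2 := Submodule.finrank_mono hi
  exact ⟨Submodule.eq_of_le_of_finrank_eq hs (by omega),
    Submodule.eq_of_le_of_finrank_eq hi (by omega)⟩

/-- The global cycle count alone detects refinements: both the invariance of the cycles of `α` and
the genus-zero condition on each of them follow from it. -/
theorem isRefinement_of_le {β α : Equiv.Perm V}
    (h : Fintype.card V + Module.finrank ℚ (invFun α Set.univ) ≤
      Module.finrank ℚ (invFun β Set.univ) +
        Module.finrank ℚ (invFun (β⁻¹ * α) Set.univ)) :
    IsRefinement β α := by
  have hα : β * (β⁻¹ * α) = α := mul_inv_cancel_left β α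
  obtain ⟨hsup, hinf⟩ := invFun_extremal (β := β) (δ := β⁻¹ * α) (S := Set.univ) (by
    rw [finrank_invFun_one, hα]
    simpa using h)
  rw [hα] at hinf
  have hSα : ∀ x y, α y ∈ cycleSet α x ↔ y ∈ cycleSet α x := fun x y =>
    Equiv.Perm.sameCycle_apply_right
  -- The indicator function of a cycle of `α` is `α`-invariant, hence invariant under `β`, `β⁻¹ * α`.
  have hind : ∀ x, (cycleSet α x).indicator (fun _ => (1 : ℚ)) ∈
      invFun β Set.univ ⊓ invFun (β⁻¹ * α) Set.univ := by
    intro x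
    rw [hinf]
    exact ⟨(indicator_mem_invFun (hSα x) ⟨fun _ => rfl, fun y hy => absurd trivial hy⟩).1,
      fun y hy => absurd trivial hy⟩
  have key : ∀ (π : Equiv.Perm V) (x : V), (cycleSet α x).indicator (fun _ => (1 : ℚ)) ∈
      invFun π Set.univ → ∀ y, π y ∈ cycleSet α x ↔ y ∈ cycleSet α x := by
    intro π x hm y
    have := hm.1 y
    simp only [Set.indicator_apply] at this
    by_cases h1 : π y ∈ cycleSet α x <;> by_cases h2 : y ∈ cycleSet α x <;> simp_all
  have hSβ : ∀ x y, β y ∈ cycleSet α x ↔ y ∈ cycleSet α x := fun x => key β x (hind x).1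
  have hSδ : ∀ x y, (β⁻¹ * α) y ∈ cycleSet α x ↔ y ∈ cycleSet α x :=
    fun x => key (β⁻¹ * α) x (hind x).2
  refine ⟨fun x => (hSβ x x).2 (Equiv.Perm.SameCycle.refl α x), fun x => ?_⟩
  have hsupS : invFun β (cycleSet α x) ⊔ invFun (β⁻¹ * α) (cycleSet α x) =
      invFun 1 (cycleSet α x) := by
    refine le_antisymm (sup_le (invFun_le_one _ _) (invFun_le_one _ _)) fun f hf => ?_
    have hf' : f ∈ invFun β Set.univ ⊔ invFun (β⁻¹ * α) Set.univ := by
      rw [hsup]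
      exact ⟨fun _ => rfl, fun y hy => absurd trivial hy⟩
    obtain ⟨g, hg, l, hl, rfl⟩ := Submodule.mem_sup.1 hf'
    refine Submodule.mem_sup.2 ⟨_, indicator_mem_invFun (hSβ x) hg, _,
      indicator_mem_invFun (hSδ x) hl, ?_⟩
    rw [← Set.indicator_add']
    refine Set.indicator_eq_self.2 fun y hy => ?_
    by_contra hyS
    exact hy (hf.2 y hyS)
  have hinfS : invFun β (cycleSet α x) ⊓ invFun (β⁻¹ * α) (cycleSet α x) =
      invFun α (cycleSet α x) := by
    refine le_antisymm ?_ fun f hf => ?_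
    · have := invFun_inf_le β (β⁻¹ * α) (cycleSet α x)
      rwa [hα] at this
    · have hf' : f ∈ invFun β Set.univ ⊓ invFun (β⁻¹ * α) Set.univ := by
        rw [hinf]
        exact ⟨hf.1, fun y hy => absurd trivial hy⟩
      exact ⟨⟨hf'.1.1, hf.2⟩, ⟨hf'.2.1, hf.2⟩⟩
  rw [← finrank_invFun (hSβ x), ← finrank_invFun (hSδ x),
    ← Submodule.finrank_sup_add_finrank_inf_eq, hsupS, hinfS, finrank_invFun_one,
    finrank_invFun_eq_one (hSα x) (Equiv.Perm.SameCycle.refl α x) fun _ hy => hy]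

/-! ### Multiplication by a transposition -/

variable [DecidableEq V]

/-- A transposition has at least `n - 1` cycles: its invariant functions contain the kernel of a
single linear functional. -/
theorem card_le_finrank_swap (x y : V) :
    Fintype.card V ≤ Module.finrank ℚ (invFun (Equiv.swap x y) Set.univ) + 1 := by
  let φ : (V → ℚ) →ₗ[ℚ] ℚ := LinearMap.proj (R := ℚ) (φ := fun _ => ℚ) x - LinearMap.proj y
  have hle : LinearMap.ker φ ≤ invFun (Equiv.swap x y) Set.univ := by
    intro f hf
    have hxy : f x = f y := sub_eq_zero.1 hf
    refine ⟨fun z => ?_, fun z hz => absurd trivial hz⟩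
    rw [Equiv.swap_apply_def]
    split_ifs with h1 h2
    · rw [h1, hxy]
    · rw [h2, hxy]
    · rfl
  have h1 := Submodule.finrank_mono hle
  have h2 := LinearMap.finrank_range_add_finrank_ker φ
  have h3 := Submodule.finrank_le (LinearMap.range φ)
  rw [Module.finrank_fintype_fun_eq_card] at h2
  rw [Module.finrank_self] at h3
  omega

theorem finrank_le_swap_mul (x y : V) (π : Equiv.Perm V) :
    Module.finrank ℚ (invFun π Set.univ) ≤
      Module.finrank ℚ (invFun (Equiv.swap x y * π) Set.univ) + 1 := by
  have h1 := invFun_mul_finrank (Equiv.swap x y) π Set.univ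
  have h2 := card_le_finrank_swap x y
  rw [finrank_invFun_one] at h1
  simp only [Nat.card_eq_fintype_card, Fintype.card_setUniv] at h1
  omega

/-- Splitting the point `x` off its cycle raises the number of cycles. -/
theorem finrank_lt_swap_apply_mul {π : Equiv.Perm V} {x : V} (hx : π x ≠ x) :
    Module.finrank ℚ (invFun π Set.univ) <
      Module.finrank ℚ (invFun (Equiv.swap x (π x) * π) Set.univ) := by
  apply Submodule.finrank_lt_finrank_of_lt
  refine lt_of_le_of_ne (fun f hf => ⟨fun z => ?_, hf.2⟩) fun heq => ?_
  · rw [Equiv.Perm.mul_apply, Equiv.swap_apply_def]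
    split_ifs with h1 h2
    · rw [hf.1, ← hf.1 z, h1]
    · rw [← hf.1 z, h2, hf.1 x]
    · exact hf.1 z
  -- The indicator function of the new fixed point `x` is not `π`-invariant.
  · have hmem : Pi.single x (1 : ℚ) ∈ invFun (Equiv.swap x (π x) * π) Set.univ := by
      refine ⟨fun z => ?_, fun z hz => absurd trivial hz⟩
      have hfix : (Equiv.swap x (π x) * π) x = x := by simp
      by_cases hz : z = x
      · rw [hz, hfix]
      · have hz' : (Equiv.swap x (π x) * π) z ≠ x := fun h =>
          hz ((Equiv.swap x (π x) * π).injective (h.trans hfix.symm))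
        rw [Pi.single_eq_of_ne hz', Pi.single_eq_of_ne hz]
    rw [← heq] at hmem
    have := hmem.1 x
    simp [Pi.single_eq_of_ne hx] at this

end

end Hypermap

/-! ### Breaking the cycle at the first point -/

open Hypermap in
/-- Lemma on refinements of the circular permutation `(1,2,…,m)`.
Points are `0`-indexed: the point `j` of the paper is `j - 1 : Fin m`, so the
circular permutation `(1,2,…,m)` is `(List.finRange m).formPerm`, the
permutation `(1)(2,…,m)` is `((List.finRange m).drop 1).formPerm`, and the
permutation `(1)(2,…,k−1)(k,…,m)` is the product of the two disjoint cycles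
`(((List.finRange m).take k).drop 1).formPerm` and
`((List.finRange m).drop k).formPerm`. -/
theorem refinement_of_cycle_break
    (m : ℕ) [NeZero m] (hm : 2 ≤ m) (β : Equiv.Perm (Fin m))
    (hβ : IsRefinement β ((List.finRange m).formPerm))
    (k : Fin m) (hk : β 0 = k) :
    IsRefinement (if k = 0 then β else Equiv.swap 0 k * β)
      (((List.finRange m).drop 1).formPerm) ∧
    (k.val ≠ 0 → k.val ≠ 1 →
      IsRefinement (Equiv.swap 0 k * β)
        ((((List.finRange m).take k.val).drop 1).formPerm *
          ((List.finRange m).drop k.val).formPerm)) := by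
  set α : Equiv.Perm (Fin m) := (List.finRange m).formPerm with hα
  obtain ⟨n, rfl⟩ : ∃ n, m = n + 2 := ⟨m - 2, by omega⟩
  have hnd : (List.finRange (n + 2)).Nodup := List.nodup_finRange _
  have hα' : ((List.finRange (n + 2)).drop 1).formPerm = Equiv.swap 0 1 * α := by
    rw [hα]
    simp [List.finRange_succ, ← mul_assoc]
  have hα0 : α 0 = 1 := by
    rw [hα]
    have := List.formPerm_apply_getElem (List.finRange (n + 2)) hnd 0 (by simp)
    simpa [Fin.ext_iff] using this
  have hcyc : ∀ x y, α.SameCycle x y := by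
    have hc : α.IsCycle := List.isCycle_formPerm hnd (by simp)
    have hne : ∀ x, α x ≠ x := fun x =>
      (List.formPerm_apply_mem_ne_self_iff _ hnd x (List.mem_finRange x)).2 (by simp)
    exact fun x y => hc.sameCycle (hne x) (hne y)
  have hzα : Module.finrank ℚ (invFun α Set.univ) = 1 :=
    finrank_invFun_eq_one (by simp) (Set.mem_univ 0) fun y _ => hcyc 0 y
  have hz : n + 3 = Module.finrank ℚ (invFun β Set.univ) +
      Module.finrank ℚ (invFun (β⁻¹ * α) Set.univ) := by
    have h := hβ.2 0
    rw [show cycleSet α 0 = Set.univ from Set.eq_univ_of_forall (hcyc 0)] at h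
    rw [finrank_invFun (by simp), finrank_invFun (by simp), ← h]
    simp
  have hzα' : Module.finrank ℚ (invFun (Equiv.swap 0 1 * α) Set.univ) ≤ 2 := by
    have h := finrank_le_swap_mul 0 1 (Equiv.swap 0 1 * α)
    rw [Equiv.swap_mul_self_mul, hzα] at h
    exact h
  have hβk : β⁻¹ k = 0 := by rw [← hk]; simp
  have hδ0 : (β⁻¹ * α) 0 = β⁻¹ 1 := by rw [Equiv.Perm.mul_apply, hα0]
  have hδne : k ≠ 1 → (β⁻¹ * α) 0 ≠ 0 := by
    intro h1 h
    rw [hδ0, Equiv.Perm.inv_eq_iff_eq, hk] at h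
    exact h1 h.symm
  have h01 : (0 : Fin (n + 2)) ≠ 1 := by simp
  -- `β⁻¹ * swap k 1 * α` arises from `β⁻¹ * α` by splitting off the point `0`.
  have hsplit : k ≠ 1 → Module.finrank ℚ (invFun (β⁻¹ * α) Set.univ) <
      Module.finrank ℚ (invFun (β⁻¹ * (Equiv.swap k 1 * α)) Set.univ) := by
    intro h1
    have h := finrank_lt_swap_apply_mul (hδne h1)
    rwa [hδ0, ← hβk, ← mul_assoc, ← Equiv.mul_swap_eq_swap_mul, mul_assoc] at h
  have hβ' : k ≠ 0 → Module.finrank ℚ (invFun β Set.univ) <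
      Module.finrank ℚ (invFun (Equiv.swap 0 k * β) Set.univ) := by
    intro h0
    have h := finrank_lt_swap_apply_mul (π := β) (x := 0) (by rwa [hk])
    rwa [hk] at h
  refine ⟨?_, fun hk0 hk1 => ?_⟩
  · rw [hα']
    apply isRefinement_of_le
    rw [Fintype.card_fin]
    by_cases h0 : k = 0
    · rw [if_pos h0]
      have h := hsplit (by rw [h0]; exact h01)
      rw [h0] at h
      omega
    · rw [if_neg h0]
      have h := hβ' h0
      rw [mul_inv_rev, Equiv.swap_inv]
      by_cases h1 : k = 1
      · rw [h1, mul_assoc, Equiv.swap_mul_self_mul]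
        rw [h1] at h
        omega
      · have h2 := hsplit h1
        -- The two transpositions give one that splits a cycle and one that costs at most one cycle.
        have hsw : Equiv.swap 0 k * Equiv.swap 0 1 = Equiv.swap 0 1 * Equiv.swap k 1 := by
          rw [Equiv.mul_swap_eq_swap_mul (Equiv.swap 0 1), Equiv.swap_apply_right,
            Equiv.swap_apply_of_ne_of_ne h0 h1, Equiv.swap_comm k 0]
        have h3 := finrank_le_swap_mul (β⁻¹ 0) (β⁻¹ 1) (β⁻¹ * (Equiv.swap k 1 * α))
        have he : Equiv.swap (β⁻¹ 0) (β⁻¹ 1) * (β⁻¹ * (Equiv.swap k 1 * α)) =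
            β⁻¹ * Equiv.swap 0 k * (Equiv.swap 0 1 * α) := by
          rw [← mul_assoc, ← Equiv.mul_swap_eq_swap_mul]
          simp only [mul_assoc]
          rw [← mul_assoc (Equiv.swap 0 1), ← hsw, mul_assoc]
        rw [he] at h3
        omega
  · have h0 : k ≠ 0 := fun h => hk0 (by simp [h])
    have h1 : k ≠ 1 := fun h => hk1 (by simp [h])
    have hα'' : (((List.finRange (n + 2)).take k.val).drop 1).formPerm *
        ((List.finRange (n + 2)).drop k.val).formPerm =
          Equiv.swap 1 k * (Equiv.swap 0 1 * α) := by
      have hdk : (List.finRange (n + 2)).drop k.val =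
          k :: (List.finRange (n + 2)).drop (k.val + 1) := by
        rw [List.drop_eq_getElem_cons (by simp)]
        simp
      obtain ⟨j, hj⟩ : ∃ j, k.val = j + 2 := ⟨k.val - 2, by omega⟩
      obtain ⟨l, hl⟩ : ∃ l, ((List.finRange (n + 2)).take k.val).drop 1 = 1 :: l := by
        rw [hj]
        simp [List.finRange_succ]
      have happ : (List.finRange (n + 2)).drop 1 =
          1 :: l ++ k :: (List.finRange (n + 2)).drop (k.val + 1) := by
        rw [← hl, ← hdk]
        conv_lhs => rw [← List.take_append_drop k.val (List.finRange (n + 2))]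
        rw [List.drop_append_of_le_length]
        simp
        omega
      have hn1 : ((List.finRange (n + 2)).drop 1).Nodup := hnd.sublist (List.drop_sublist _ _)
      rw [← hα', happ, formPerm_append_cons _ _ _ _ (happ ▸ hn1), hl, hdk,
        Equiv.swap_mul_self_mul]
    have hz3 : Module.finrank ℚ (invFun (Equiv.swap 1 k * (Equiv.swap 0 1 * α)) Set.univ) ≤ 3 := by
      have h := finrank_le_swap_mul 1 k (Equiv.swap 1 k * (Equiv.swap 0 1 * α))
      rw [Equiv.swap_mul_self_mul] at h
      omega
    have hsw : Equiv.swap 1 k * Equiv.swap 0 1 = Equiv.swap 0 k * Equiv.swap k 1 := by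
      rw [Equiv.mul_swap_eq_swap_mul, Equiv.swap_apply_left,
        Equiv.swap_apply_of_ne_of_ne h01 h0.symm, Equiv.swap_comm 1 k]
    have h2 := hβ' h0
    have h3 := hsplit h1
    rw [hα'']
    apply isRefinement_of_le
    rw [Fintype.card_fin]
    have he : (Equiv.swap 0 k * β)⁻¹ * (Equiv.swap 1 k * (Equiv.swap 0 1 * α)) =
        β⁻¹ * (Equiv.swap k 1 * α) := by
      rw [mul_inv_rev, Equiv.swap_inv, ← mul_assoc (Equiv.swap 1 k), hsw, mul_assoc, mul_assoc,
        Equiv.swap_mul_self_mul]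
    rw [he]
    omega
end

section
/- Let (σ,α) be a collection of hypermaps with at least two connected components. If the points i and j belong to different connected components of (σ,α), then R(σ,α;u,v) = R((i,j)σ, α; u,v), where (i,j) denotes the transposition exchanging i and j. -/
/-!
Multiplying `σ` by the transposition `(i j)`, with `i` and `j` in different components of `(σ, β)`,
glues precisely these two components together, so `κ` drops by one (`kappa_swap_mul`).
A refinement `β` of `α` has components inside those of `(σ, α)`, so this applies to every `β`
occurring in the Whitney polynomial and to `α` itself. Since `z(σ) = κ(σ, 1)`, it also shows that
`z(σ)` drops by one. Both exponents are therefore unchanged, term by term.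
-/

open scoped Classical

namespace Hypermap

variable {γ : Type*}

/-- The equivalence relation "lying in the same connected component of `(σ, β)`". -/
def comp (σ β : Equiv.Perm γ) : Setoid γ :=
  MulAction.orbitRel (Subgroup.closure ({σ, β} : Set (Equiv.Perm γ))) γ

lemma comp_left (σ β : Equiv.Perm γ) (x : γ) : comp σ β (σ x) x :=
  ⟨⟨σ, Subgroup.subset_closure (by simp)⟩, rfl⟩

lemma comp_right (σ β : Equiv.Perm γ) (x : γ) : comp σ β (β x) x :=
  ⟨⟨β, Subgroup.subset_closure (by simp)⟩, rfl⟩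

/-- `comp σ β` is the smallest equivalence relation whose classes are invariant under `σ` and `β`. -/
lemma comp_le {σ β : Equiv.Perm γ} {s : Setoid γ} (h₁ : ∀ x, s (σ x) x) (h₂ : ∀ x, s (β x) x) :
    comp σ β ≤ s := by
  rintro x y ⟨⟨g, hg⟩, rfl⟩
  change s (g y) y
  induction hg using Subgroup.closure_induction generalizing y with
  | mem g hg =>
    rcases hg with rfl | rfl
    · exact h₁ y
    · exact h₂ y
  | one => exact s.refl y
  | mul a b _ _ ha hb => exact Setoid.trans' s (ha (y := b y)) (hb (y := y))
  | inv a _ ha =>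
    have := ha (y := a⁻¹ y)
    rw [← Equiv.Perm.mul_apply, mul_inv_cancel, Equiv.Perm.one_apply] at this
    exact s.symm this

lemma zc_eq_kappa_one (σ : Equiv.Perm γ) : zc σ = kappa σ 1 := by
  have h : Subgroup.zpowers σ = Subgroup.closure ({σ, 1} : Set (Equiv.Perm γ)) := by
    rw [Subgroup.zpowers_eq_closure, Set.pair_comm, Subgroup.closure_insert_one]
  unfold zc kappa
  rw [h]

lemma comp_mono {σ α β : Equiv.Perm γ} (h : ∀ x, α.SameCycle x (β x)) :
    comp σ β ≤ comp σ α := by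
  refine comp_le (comp_left σ α) fun x => ?_
  obtain ⟨n, hn⟩ := h x
  rw [← hn]
  exact ⟨⟨α ^ n, zpow_mem (Subgroup.subset_closure (by simp)) n⟩, rfl⟩

/-- The component of `x`, with the component of `j` replaced by that of `i`. -/
noncomputable def mergeMap (σ β : Equiv.Perm γ) (i j x : γ) : Quotient (comp σ β) :=
  if comp σ β x j then Quotient.mk _ i else Quotient.mk _ x

lemma mergeMap_congr {σ β : Equiv.Perm γ} (i j : γ) {x y : γ} (h : comp σ β x y) :
    mergeMap σ β i j x = mergeMap σ β i j y := by
  unfold mergeMap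
  have hj : comp σ β x j ↔ comp σ β y j :=
    ⟨fun k => Setoid.trans' _ (Setoid.symm' _ h) k, fun k => Setoid.trans' _ h k⟩
  by_cases hy : comp σ β y j
  · rw [if_pos hy, if_pos (hj.2 hy)]
  · rw [if_neg hy, if_neg (mt hj.1 hy)]
    exact Quotient.sound h

variable [DecidableEq γ]

lemma mergeMap_swap_mul {σ β : Equiv.Perm γ} {i j x y : γ} (hij : ¬ comp σ β i j)
    (h : comp (Equiv.swap i j * σ) β x y) :
    mergeMap σ β i j x = mergeMap σ β i j y := by
  have hmerge : mergeMap σ β i j i = mergeMap σ β i j j := by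
    unfold mergeMap
    rw [if_neg hij, if_pos (Setoid.refl' _ j)]
  refine comp_le (s := Setoid.ker (mergeMap σ β i j)) (fun x => ?_) (fun x => ?_) h
  · have hx := mergeMap_congr i j (comp_left σ β x)
    change mergeMap σ β i j (Equiv.swap i j (σ x)) = mergeMap σ β i j x
    rw [← hx]
    by_cases h1 : σ x = i
    · rw [h1, Equiv.swap_apply_left, hmerge]
    by_cases h2 : σ x = j
    · rw [h2, Equiv.swap_apply_right, hmerge]
    rw [Equiv.swap_apply_of_ne_of_ne h1 h2]
  · exact mergeMap_congr i j (comp_right σ β x)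

variable [Fintype γ]

/-- Following the `σ`-cycle of `i`, the permutation `(i j)σ` agrees with `σ` until the cycle is about
to return to `i`, where it goes to `j` instead. -/
lemma comp_swap_mul_rel {σ β : Equiv.Perm γ} {i j : γ} (hij : ¬ comp σ β i j) :
    comp (Equiv.swap i j * σ) β i j := by
  set T := comp (Equiv.swap i j * σ) β with hT
  by_contra hc
  have key : ∀ m : ℕ, T ((σ ^ m) i) i := by
    intro m
    induction m with
    | zero => exact T.refl i
    | succ m ih =>
      have hs := comp_left (Equiv.swap i j * σ) β ((σ ^ m) i)
      rw [pow_succ', Equiv.Perm.mul_apply]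
      rw [Equiv.Perm.mul_apply] at hs
      have h1 : σ ((σ ^ m) i) ≠ i := by
        intro h
        rw [h, Equiv.swap_apply_left] at hs
        exact hc (T.symm (T.trans hs ih))
      have h2 : σ ((σ ^ m) i) ≠ j := by
        intro h
        apply hij
        refine (comp σ β).symm ⟨⟨σ ^ (m + 1), pow_mem (Subgroup.subset_closure (by simp)) _⟩, ?_⟩
        change (σ ^ (m + 1)) i = j
        rw [pow_succ', Equiv.Perm.mul_apply, h]
      rw [Equiv.swap_apply_of_ne_of_ne h1 h2] at hs
      exact T.trans hs ih
  obtain ⟨m, _, hm⟩ := (show σ.SameCycle i (σ⁻¹ i) from ⟨-1, by simp⟩).exists_pow_eq'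
  have h1 := key m
  have hs := comp_left (Equiv.swap i j * σ) β (σ⁻¹ i)
  rw [← Equiv.Perm.mul_apply, mul_assoc, mul_inv_cancel, mul_one, Equiv.swap_apply_left] at hs
  rw [hm] at h1
  exact hc (T.symm (T.trans hs h1))

lemma comp_le_swap_mul {σ β : Equiv.Perm γ} {i j : γ} (hij : ¬ comp σ β i j) :
    comp σ β ≤ comp (Equiv.swap i j * σ) β := by
  have hT := comp_swap_mul_rel hij
  refine comp_le (fun x => ?_) (comp_right _ β)
  have hs := comp_left (Equiv.swap i j * σ) β x
  rw [Equiv.Perm.mul_apply] at hs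
  by_cases h1 : σ x = i
  · rw [h1, Equiv.swap_apply_left] at hs
    rw [h1]
    exact Setoid.trans' _ hT hs
  by_cases h2 : σ x = j
  · rw [h2, Equiv.swap_apply_right] at hs
    rw [h2]
    exact Setoid.trans' _ (Setoid.symm' _ hT) hs
  rwa [Equiv.swap_apply_of_ne_of_ne h1 h2] at hs

/-- The components of `((i j)σ, β)` are in bijection with the components of `(σ, β)` other than
that of `j`. -/
lemma kappa_swap_mul {σ β : Equiv.Perm γ} {i j : γ} (hij : ¬ comp σ β i j) :
    kappa σ β = kappa (Equiv.swap i j * σ) β + 1 := by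
  have hne : ∀ x, mergeMap σ β i j x ≠ Quotient.mk _ j := by
    intro x hx
    unfold mergeMap at hx
    split_ifs at hx with h
    · exact hij (Quotient.exact hx)
    · exact h (Quotient.exact hx)
  let e : Quotient (comp (Equiv.swap i j * σ) β) →
      {q : Quotient (comp σ β) // q ≠ Quotient.mk _ j} :=
    Quotient.lift (fun x => ⟨mergeMap σ β i j x, hne x⟩)
      fun x y h => Subtype.ext (mergeMap_swap_mul hij h)
  have hback : ∀ x y, mergeMap σ β i j x = Quotient.mk _ y →
      comp (Equiv.swap i j * σ) β x y := by
    intro x y h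
    unfold mergeMap at h
    split_ifs at h with hx
    · exact Setoid.trans' _ (comp_le_swap_mul hij hx) (Setoid.trans' _
        (Setoid.symm' _ (comp_swap_mul_rel hij)) (comp_le_swap_mul hij (Quotient.exact h)))
    · exact comp_le_swap_mul hij (Quotient.exact h)
  have he : Function.Bijective e := by
    constructor
    · rintro ⟨x⟩ ⟨y⟩ h
      have h' : mergeMap σ β i j x = mergeMap σ β i j y := congrArg Subtype.val h
      obtain ⟨z, hz⟩ := Quotient.exists_rep (mergeMap σ β i j y)
      exact Quotient.sound (Setoid.trans' _ (hback x z (h'.trans hz.symm))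
        (Setoid.symm' _ (hback y z hz.symm)))
    · rintro ⟨⟨x⟩, hx⟩
      refine ⟨Quotient.mk _ x, Subtype.ext ?_⟩
      have hxj : ¬ comp σ β x j := fun h => hx (Quotient.sound h)
      exact if_neg hxj
  have hcard := Nat.card_eq_of_bijective e he
  change Nat.card (Quotient (comp σ β)) = Nat.card (Quotient (comp (Equiv.swap i j * σ) β)) + 1
  have hpos : 0 < Fintype.card (Quotient (comp σ β)) := Fintype.card_pos_iff.2 ⟨Quotient.mk _ j⟩
  rw [hcard, Nat.card_eq_fintype_card, Nat.card_eq_fintype_card, Fintype.card_subtype_compl,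
    Fintype.card_subtype_eq]
  omega

end Hypermap

open Hypermap in
/-- merging two vertices from different connected components does
not change the Whitney polynomial. -/
theorem whitney_merge_components
    {γ : Type*} [Fintype γ] [DecidableEq γ] (σ α : Equiv.Perm γ)
    (h2 : 2 ≤ kappa σ α) (i j : γ)
    (hij : j ∉ MulAction.orbit (Subgroup.closure ({σ, α} : Set (Equiv.Perm γ))) i)
    {A : Type*} [CommRing A] (u v : A) :
    whitney σ α u v = whitney (Equiv.swap i j * σ) α u v := by
  have hα : ¬ comp σ α i j := fun h => hij (Setoid.symm' _ h)
  have hκα := kappa_swap_mul hα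
  have hz : zc σ = zc (Equiv.swap i j * σ) + 1 := by
    rw [zc_eq_kappa_one, zc_eq_kappa_one]
    exact kappa_swap_mul fun h => hα (comp_mono (fun x => Equiv.Perm.SameCycle.refl _ _) h)
  unfold whitney
  refine Finset.sum_congr rfl fun β hβ => ?_
  have hκβ := kappa_swap_mul fun h => hα (comp_mono (Finset.mem_filter.1 hβ).2.1 h)
  -- Both sides of each subtraction drop by one, so truncation affects them equally.
  congr 2 <;> omega
end

section
/- For any collection of hypermaps (σ,α), the evaluation R(σ,α;0,0) of its Whitney polynomial equals the number of spanning hyperforests of (σ,α), that is, the number of refinements β of α such that κ(σ,β) = κ(σ,α), g(σ,β) = 0, and z(β⁻¹σ) = κ(σ,β). -/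
/-!
The term of the Whitney polynomial at a refinement `β` survives the substitution `u = v = 0`
exactly when both of its exponents vanish. Since every `β ≤ α` satisfies `κ(σ,β) ≥ κ(σ,α)` and
every pair satisfies `z(σ) + z(β) ≤ κ(σ,β) + n`, the truncated subtractions in the exponents are
honest ones, so the surviving `β` are those with `κ(σ,β) = κ(σ,α)` and
`κ(σ,β) + n = z(σ) + z(β)`. The latter equation says that `(σ,β)` is a hyperforest: `z(β⁻¹σ) ≥ κ(σ,β)`
because cycles of `β⁻¹σ` stay inside components, and the opposite inequality is the
nonnegativity of the genus, `z(σ) + z(β) + z(β⁻¹σ) ≤ n + 2κ(σ,β)` (`genus_bounds`).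

Both bounds are proved by induction on `β`, multiplying by one transposition at a time. The
effect of a transposition is read off from orbit equivalence relations: gluing two classes lowers
the number of classes by at most one (`card_le_card_ker_add_one`), and multiplying a permutation by
a transposition of two points in different cycles merges these cycles
(`zc_swap_mul_of_not_sameCycle`).
-/


open scoped Classical

namespace Hypermap

open Equiv Equiv.Perm

/-! ### Orbit equivalence relations -/

/-- The equivalence relation on `γ` whose classes are the orbits of the group generated by `S`. -/
def orbSetoid {γ : Type*} (S : Set (Perm γ)) : Setoid γ :=
  MulAction.orbitRel (Subgroup.closure S) γ

theorem orbSetoid_of_mem {γ : Type*} {S : Set (Perm γ)} {g : Perm γ} (hg : g ∈ S) (z : γ) :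
    orbSetoid S (g z) z :=
  ⟨⟨g, Subgroup.subset_closure hg⟩, rfl⟩

/-- `orbSetoid S` is the least equivalence relation relating every `z` to its images under `S`. -/
theorem orbSetoid_le {γ : Type*} {S : Set (Perm γ)} {r : Setoid γ}
    (h : ∀ g ∈ S, ∀ z, r (g z) z) : orbSetoid S ≤ r := by
  rintro a b ⟨⟨g, hg⟩, rfl⟩
  change r (g b) b
  induction hg using Subgroup.closure_induction generalizing b with
  | mem g hg => exact h g hg b
  | one => exact r.refl _
  | mul g k _ _ hg hk => exact r.trans (hg (b := k b)) (hk (b := b))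
  | inv g _ hg =>
    have := hg (b := g⁻¹ b)
    rw [← Perm.mul_apply, mul_inv_cancel, Perm.one_apply] at this
    exact r.symm this

theorem orbSetoid_pair_le {γ : Type*} {σ β : Perm γ} {r : Setoid γ}
    (h₁ : ∀ z, r (σ z) z) (h₂ : ∀ z, r (β z) z) : orbSetoid {σ, β} ≤ r := by
  apply orbSetoid_le
  rintro g (rfl | rfl)
  · exact h₁
  · exact h₂

theorem orbSetoid_singleton_le {γ : Type*} {π : Perm γ} {r : Setoid γ}
    (h : ∀ z, r (π z) z) : orbSetoid {π} ≤ r := by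
  apply orbSetoid_le
  rintro g rfl
  exact h

theorem kappa_eq {γ : Type*} (σ α : Perm γ) :
    kappa σ α = Nat.card (Quotient (orbSetoid {σ, α})) := rfl

theorem zc_eq {γ : Type*} (π : Perm γ) : zc π = Nat.card (Quotient (orbSetoid {π})) := by
  rw [zc, Subgroup.zpowers_eq_closure]; rfl

theorem orbSetoid_sameCycle {γ : Type*} (π : Perm γ) {a b : γ} (h : π.SameCycle a b) :
    orbSetoid {π} a b := by
  obtain ⟨i, rfl⟩ := h
  have hi : π ^ i ∈ Subgroup.closure {π} :=
    Subgroup.zpow_mem _ (Subgroup.subset_closure (Set.mem_singleton π)) i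
  have h : orbSetoid {π} ((π ^ i) a) a := ⟨⟨π ^ i, hi⟩, rfl⟩
  exact Setoid.symm' _ h

theorem sameCycle_of_orbSetoid {γ : Type*} (π : Perm γ) {a b : γ} (h : orbSetoid {π} a b) :
    π.SameCycle a b := by
  have : orbSetoid {π} ≤ SameCycle.setoid π :=
    orbSetoid_singleton_le fun z => sameCycle_apply_left.2 (SameCycle.refl π z)
  exact this h

/-! ### Numbers of classes, and merging two classes -/

theorem card_quotient_le {γ : Type*} [Finite γ] {r s : Setoid γ} (h : r ≤ s) :
    Nat.card (Quotient s) ≤ Nat.card (Quotient r) :=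
  Nat.card_le_card_of_surjective (Quotient.map' id h) (by
    rintro ⟨z⟩; exact ⟨Quotient.mk _ z, rfl⟩)

theorem card_quotient_lt {γ : Type*} [Finite γ] {r s : Setoid γ} (h : r ≤ s) {x y : γ}
    (hs : s x y) (hr : ¬ r x y) : Nat.card (Quotient s) < Nat.card (Quotient r) := by
  refine lt_of_le_of_ne (card_quotient_le h) fun he => hr ?_
  have hsurj : Function.Surjective (Quotient.map' id h : Quotient r → Quotient s) := by
    rintro ⟨z⟩; exact ⟨Quotient.mk _ z, rfl⟩
  have hinj := ((Nat.bijective_iff_surjective_and_card _).2 ⟨hsurj, he.symm⟩).1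
  have : (Quotient.mk r x) = Quotient.mk r y := hinj (Quotient.sound hs)
  exact Quotient.exact this

/-- The quotient map of `r`, followed by sending the class of `x` to the class of `y`. Its kernel
is the relation obtained from `r` by merging these two classes. -/
noncomputable def glue {γ : Type*} (r : Setoid γ) (x y z : γ) : Quotient r :=
  if Quotient.mk r z = Quotient.mk r x then Quotient.mk r y else Quotient.mk r z

theorem glue_eq_of_rel {γ : Type*} {r : Setoid γ} (x y : γ) {a b : γ} (h : r a b) :
    glue r x y a = glue r x y b := by
  have : Quotient.mk r a = Quotient.mk r b := Quotient.sound h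
  rw [glue, glue, this]

theorem glue_swap {γ : Type*} [DecidableEq γ] (r : Setoid γ) (x y z : γ) :
    glue r x y (swap x y z) = glue r x y z := by
  have hxy : glue r x y x = glue r x y y := by simp [glue]
  rcases eq_or_ne z x with rfl | hx
  · rw [swap_apply_left, hxy]
  rcases eq_or_ne z y with rfl | hy
  · rw [swap_apply_right, hxy]
  · rw [swap_apply_of_ne_of_ne hx hy]

theorem card_le_card_ker_add_one {γ : Type*} [Finite γ] (r : Setoid γ) (x y : γ) :
    Nat.card (Quotient r) ≤ Nat.card (Quotient (Setoid.ker (glue r x y))) + 1 := by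
  rw [Nat.card_congr (Setoid.quotientKerEquivRange (glue r x y)), Nat.card_coe_set_eq,
    ← Set.ncard_univ]
  refine le_trans (Set.ncard_le_ncard ?_ (Set.toFinite _))
    (Set.ncard_insert_le (Quotient.mk r x) _)
  rintro ⟨z⟩ -
  by_cases h : Quotient.mk r z = Quotient.mk r x
  · exact Or.inl h
  · exact Or.inr ⟨z, if_neg h⟩

theorem orbSetoid_swap {γ : Type*} [DecidableEq γ] {r : Setoid γ} {x y : γ} (h : r x y) (z : γ) :
    r (swap x y z) z := by
  rcases eq_or_ne z x with rfl | hx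
  · rw [swap_apply_left]; exact r.symm h
  rcases eq_or_ne z y with rfl | hy
  · rwa [swap_apply_right]
  · rw [swap_apply_of_ne_of_ne hx hy]

/-! ### Multiplication by a transposition -/

/-- Multiplying by a transposition of points of different cycles puts them in the same cycle.
Otherwise, with `O` the new cycle of `x` and `P` its old one, `O ∩ P` would be mapped by `π` into
`O ∩ P` without `x`, which is impossible by cardinality. -/
theorem sameCycle_swap_mul {γ : Type*} [Fintype γ] [DecidableEq γ] {π : Perm γ} {x y : γ}
    (h : ¬ π.SameCycle x y) : (swap x y * π).SameCycle x y := by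
  by_contra hc
  set T : Finset γ :=
    Finset.univ.filter fun z => (swap x y * π).SameCycle x z ∧ π.SameCycle x z with hT
  have hx : x ∈ T := by simp [hT, SameCycle.refl]
  have hmap : ∀ z ∈ T, π z ∈ T.erase x := by
    intro z hz
    obtain ⟨h1, h2⟩ := (Finset.mem_filter.1 hz).2
    have h1' : (swap x y * π).SameCycle x (swap x y (π z)) :=
      sameCycle_apply_right (f := swap x y * π).2 h1
    have h2' : π.SameCycle x (π z) := sameCycle_apply_right.2 h2
    have hne : π z ≠ x := by
      intro e
      rw [e, swap_apply_left] at h1'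
      exact hc h1'
    have hney : π z ≠ y := by
      intro e
      rw [e] at h2'
      exact h h2'
    rw [swap_apply_of_ne_of_ne hne hney] at h1'
    exact Finset.mem_erase.2 ⟨hne, Finset.mem_filter.2 ⟨Finset.mem_univ _, h1', h2'⟩⟩
  have h1 := Finset.card_le_card_of_injOn π hmap π.injective.injOn
  have h2 := Finset.card_erase_lt_of_mem hx
  omega

theorem zc_swap_mul_of_not_sameCycle {γ : Type*} [Fintype γ] [DecidableEq γ] {π : Perm γ}
    {x y : γ} (h : ¬ π.SameCycle x y) : zc (swap x y * π) + 1 ≤ zc π := by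
  rw [zc_eq, zc_eq]
  have hxy := orbSetoid_sameCycle _ (sameCycle_swap_mul h)
  refine card_quotient_lt (orbSetoid_singleton_le fun z => ?_) hxy
    fun hr => h (sameCycle_of_orbSetoid π hr)
  have h1 := orbSetoid_swap hxy ((swap x y * π) z)
  have h2 := orbSetoid_of_mem (Set.mem_singleton (swap x y * π)) z
  rw [← Perm.mul_apply, ← mul_assoc, swap_mul_self, one_mul] at h1
  exact Setoid.trans' _ h1 h2

/-- Multiplying by a transposition splits off at most one cycle. -/
theorem zc_swap_mul_le {γ : Type*} [Finite γ] [DecidableEq γ] (π : Perm γ) (x y : γ) :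
    zc (swap x y * π) ≤ zc π + 1 := by
  rw [zc_eq, zc_eq]
  refine (card_le_card_ker_add_one _ x y).trans (Nat.succ_le_succ (card_quotient_le ?_))
  refine orbSetoid_singleton_le fun z => ?_
  rw [Setoid.ker_def, ← glue_swap]
  exact glue_eq_of_rel _ _ (orbSetoid_of_mem (Set.mem_singleton (swap x y * π)) z)

theorem kappa_le_kappa_swap_mul_add_one {γ : Type*} [Finite γ] [DecidableEq γ] (σ β : Perm γ)
    (x y : γ) : kappa σ β ≤ kappa σ (swap x y * β) + 1 := by
  rw [kappa_eq, kappa_eq]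
  refine (card_le_card_ker_add_one _ x y).trans (Nat.succ_le_succ (card_quotient_le ?_))
  refine orbSetoid_pair_le (fun z => ?_) fun z => ?_
  · exact glue_eq_of_rel _ _ (orbSetoid_of_mem (by simp) z)
  · rw [Setoid.ker_def, Perm.mul_apply, glue_swap]
    exact glue_eq_of_rel _ _ (orbSetoid_of_mem (by simp) z)

theorem kappa_le_kappa_swap_mul {γ : Type*} [Finite γ] [DecidableEq γ] {σ β : Perm γ}
    {x y : γ} (h : orbSetoid {σ, β} x y) : kappa σ β ≤ kappa σ (swap x y * β) := by
  rw [kappa_eq, kappa_eq]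
  refine card_quotient_le (orbSetoid_pair_le (fun z => orbSetoid_of_mem (by simp) z) fun z => ?_)
  exact Setoid.trans' _ (orbSetoid_swap h (β z)) (orbSetoid_of_mem (by simp) z)

/-! ### Faces and components, and the genus inequality -/

theorem inv_mul_rel {γ : Type*} (σ β : Perm γ) (z : γ) : orbSetoid {σ, β} ((β⁻¹ * σ) z) z := by
  have h1 := orbSetoid_of_mem (S := {σ, β}) (g := β) (by simp) ((β⁻¹ * σ) z)
  rw [← Perm.mul_apply, mul_inv_cancel_left] at h1
  exact Setoid.trans' _ (Setoid.symm' _ h1) (orbSetoid_of_mem (by simp) z)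

theorem kappa_le_zc_inv_mul {γ : Type*} [Finite γ] (σ β : Perm γ) :
    kappa σ β ≤ zc (β⁻¹ * σ) := by
  rw [kappa_eq, zc_eq]
  exact card_quotient_le (orbSetoid_singleton_le (inv_mul_rel σ β))

theorem zc_one {γ : Type*} [Fintype γ] : zc (1 : Perm γ) = Fintype.card γ := by
  have : orbSetoid {(1 : Perm γ)} = ⊥ := le_antisymm (orbSetoid_singleton_le fun z => rfl) bot_le
  rw [zc_eq, this, ← Nat.card_eq_fintype_card]
  exact Nat.card_congr Setoid.quotientBotEquiv

theorem kappa_one {γ : Type*} [Finite γ] (σ : Perm γ) : kappa σ 1 = zc σ := by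
  have : orbSetoid {σ, 1} = orbSetoid {σ} := le_antisymm
    (orbSetoid_pair_le (fun z => orbSetoid_of_mem (Set.mem_singleton σ) z) fun z => Setoid.refl' _ z)
    (orbSetoid_singleton_le fun z => orbSetoid_of_mem (by simp) z)
  rw [kappa_eq, zc_eq, this]

/-- The first bound counts the components of the bipartite graph whose `n` edges join the cycles
of `σ` to those of `β`; the second one is the nonnegativity of the genus. -/
theorem genus_bounds {γ : Type*} [Fintype γ] [DecidableEq γ] (σ β : Perm γ) :
    zc σ + zc β ≤ kappa σ β + Fintype.card γ ∧
      zc σ + zc β + zc (β⁻¹ * σ) ≤ Fintype.card γ + 2 * kappa σ β := by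
  induction hN : β.support.card using Nat.strong_induction_on generalizing β with
  | _ N ih =>
  by_cases hβ : β = 1
  · subst hβ
    rw [kappa_one, zc_one, inv_one, one_mul]
    omega
  obtain ⟨x, hx⟩ : ∃ x, β x ≠ x := by
    by_contra! h
    exact hβ (Perm.ext h)
  -- `ρ` is `β` with the point `x` cut out of its cycle.
  obtain ⟨y, hy⟩ : ∃ y, y = β x := ⟨_, rfl⟩
  obtain ⟨ρ, hρ⟩ : ∃ ρ, ρ = swap x y * β := ⟨_, rfl⟩
  have hβρ : β = swap x y * ρ := by rw [hρ, ← mul_assoc, swap_mul_self, one_mul]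
  have hfix : ρ x = x := by rw [hρ, Perm.mul_apply, ← hy, swap_apply_right]
  have hlt : ρ.support.card < N := by
    rw [← hN, hρ, hy]
    exact card_support_swap_mul hx
  obtain ⟨ih1, ih2⟩ := ih _ hlt ρ rfl
  have hnot : ¬ ρ.SameCycle x y := by
    rintro ⟨i, hi⟩
    rw [zpow_apply_eq_self_of_apply_eq_self hfix] at hi
    exact hx (hy ▸ hi.symm)
  have hz : zc β + 1 ≤ zc ρ := hβρ ▸ zc_swap_mul_of_not_sameCycle hnot
  have hk : kappa σ ρ ≤ kappa σ β + 1 := hβρ ▸ kappa_le_kappa_swap_mul_add_one σ ρ x y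
  refine ⟨by omega, ?_⟩
  have hconj : β⁻¹ * σ = swap (ρ⁻¹ x) (ρ⁻¹ y) * (ρ⁻¹ * σ) := by
    rw [← mul_assoc, ← Equiv.mul_swap_eq_swap_mul, hβρ, mul_inv_rev, swap_inv]
  by_cases hs : (ρ⁻¹ * σ).SameCycle (ρ⁻¹ x) (ρ⁻¹ y)
  · -- The face splits, so `x` and `y` already lie in the same component of `(σ, ρ)`.
    have hZ : zc (β⁻¹ * σ) ≤ zc (ρ⁻¹ * σ) + 1 := hconj ▸ zc_swap_mul_le _ _ _
    have hab : orbSetoid {σ, ρ} (ρ⁻¹ x) (ρ⁻¹ y) :=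
      orbSetoid_singleton_le (inv_mul_rel σ ρ) (orbSetoid_sameCycle _ hs)
    have hinv : ∀ w, orbSetoid {σ, ρ} w (ρ⁻¹ w) := fun w => by
      have := orbSetoid_of_mem (S := {σ, ρ}) (g := ρ) (by simp) (ρ⁻¹ w)
      rwa [← Perm.mul_apply, mul_inv_cancel, Perm.one_apply] at this
    have hxy : orbSetoid {σ, ρ} x y :=
      Setoid.trans' _ (hinv x) (Setoid.trans' _ hab (Setoid.symm' _ (hinv y)))
    have hk' : kappa σ ρ ≤ kappa σ β := hβρ ▸ kappa_le_kappa_swap_mul hxy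
    omega
  · have hZ : zc (β⁻¹ * σ) + 1 ≤ zc (ρ⁻¹ * σ) := hconj ▸ zc_swap_mul_of_not_sameCycle hs
    omega

theorem kappa_le_of_isRefinement {γ : Type*} [Fintype γ] [DecidableEq γ] {σ α β : Perm γ}
    (h : IsRefinement β α) : kappa σ α ≤ kappa σ β := by
  rw [kappa_eq, kappa_eq]
  refine card_quotient_le (orbSetoid_pair_le (fun z => orbSetoid_of_mem (by simp) z) fun z => ?_)
  have hle : orbSetoid {α} ≤ orbSetoid {σ, α} :=
    orbSetoid_singleton_le fun z => orbSetoid_of_mem (by simp) z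
  exact Setoid.symm' _ (hle (orbSetoid_sameCycle α (h.1 z)))

end Hypermap

open Hypermap in
/-- `R(σ,α;0,0)` is the number of spanning hyperforests of
`(σ,α)`, i.e. of refinements `β` of `α` with `κ(σ,β) = κ(σ,α)`, `g(σ,β) = 0`
(expressed through the genus formula `n + 2κ(σ,β) = z(σ) + z(β) + z(β⁻¹σ)`),
and `z(β⁻¹σ) = κ(σ,β)`. -/
theorem whitney_zero_zero_spanning_hyperforests
    {γ : Type*} [Fintype γ] [DecidableEq γ] (σ α : Equiv.Perm γ) :
    whitney σ α (0 : ℤ) 0 =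
      Nat.card {β : Equiv.Perm γ // IsRefinement β α ∧
        kappa σ β = kappa σ α ∧
        Fintype.card γ + 2 * kappa σ β = zc σ + zc β + zc (β⁻¹ * σ) ∧
        zc (β⁻¹ * σ) = kappa σ β} := by
  rw [whitney, Nat.card_eq_fintype_card, Fintype.card_subtype, Finset.card_filter,
    Finset.sum_filter, Nat.cast_sum]
  refine Finset.sum_congr rfl fun β _ => ?_
  by_cases hβ : IsRefinement β α
  · obtain ⟨h1, h2⟩ := genus_bounds σ β
    have h3 := kappa_le_of_isRefinement (σ := σ) hβ
    have h4 := kappa_le_zc_inv_mul σ β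
    have hiff : (kappa σ β = kappa σ α ∧
        Fintype.card γ + 2 * kappa σ β = zc σ + zc β + zc (β⁻¹ * σ) ∧
        zc (β⁻¹ * σ) = kappa σ β) ↔
        (kappa σ β - kappa σ α = 0 ∧ kappa σ β + Fintype.card γ - zc β - zc σ = 0) := by
      omega
    simp only [hβ, true_and, if_true, hiff, zero_pow_eq]
    split_ifs <;> simp_all
  · simp [hβ]
end

section
/- Let (σ,α) be any hypermap on the set of points {1,2,…,n}. Then its medial map M(σ,α) = (σ′,α′) is a map (every cycle of α′ has length 2, i.e. α′ is a fixed-point-free involution), the pair (σ′,α′) generates a transitive permutation group on the 2n signed points, and its genus equals the genus of (σ,α): g(M(σ,α)) = g(σ,α). In particular z(σ′) = z(α), z(α′) = n, and z(α′⁻¹σ′) = z(α⁻¹σ) + z(σ). -/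
/-!
Writing `i⁻ = (i, false)` and `i⁺ = (i, true)`, all cycle counts are obtained from explicit
bijections between orbit sets, built from functions that are constant along a permutation
(`Cycles.lift`).

* Forgetting signs maps the cycles of `σ′` bijectively to those of `α`, since `σ′` sends
  `i⁻ ↦ i⁺ ↦ (α i)⁻`.
* Each cycle of `α′` contains exactly one positive point, so there are `n` of them.
* `α′⁻¹σ′` preserves signs: it sends `i⁻ ↦ (σ i)⁻` and `i⁺ ↦ (σ⁻¹ α i)⁺`. Its cycles are therefore
  those of `σ` on negative points and those of `σ⁻¹α = (α⁻¹σ)⁻¹` on positive points.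
* For transitivity, `i⁻` and `i⁺` lie in one orbit of `⟨σ′, α′⟩`, and `i⁺` is sent to `(α i)⁻` by
  `σ′` and to `(σ i)⁻` by `α′`; so the orbit of `i⁻` is constant along `σ` and `α`, hence constant.

The genus equality is arithmetic from the three counts.
-/


open scoped Classical

namespace Hypermap

variable {γ : Type*} [Fintype γ] [DecidableEq γ]

/-- The vertex permutation `σ′` of the medial map of a hypermap `(σ,α)`.
Signed points are pairs `(i, s) : γ × Bool`, with `(i, false) = i⁻` and
`(i, true) = i⁺`.  To each cycle `(i₁,…,i_k)` of `α` corresponds the cycle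
`(i₁⁻,i₁⁺,i₂⁻,i₂⁺,…,i_k⁻,i_k⁺)` of `σ′`. -/
def medialSigma (α : Equiv.Perm γ) : Equiv.Perm (γ × Bool) where
  toFun p := if p.2 then (α p.1, false) else (p.1, true)
  invFun p := if p.2 then (p.1, false) else (α⁻¹ p.1, true)
  left_inv := by rintro ⟨i, _ | _⟩ <;> simp
  right_inv := by rintro ⟨i, _ | _⟩ <;> simp

/-- The edge permutation `α′` of the medial map of a hypermap `(σ,α)`:
its cycles are the `2`-cycles `(i⁺, σ(i)⁻)`. -/
def medialAlpha (σ : Equiv.Perm γ) : Equiv.Perm (γ × Bool) where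
  toFun p := if p.2 then (σ p.1, false) else (σ⁻¹ p.1, true)
  invFun p := if p.2 then (σ p.1, false) else (σ⁻¹ p.1, true)
  left_inv := by rintro ⟨i, _ | _⟩ <;> simp
  right_inv := by rintro ⟨i, _ | _⟩ <;> simp

end Hypermap

namespace Hypermap

/-- A function invariant under a set of permutations is invariant under the group it generates. -/
theorem eq_of_mem_closure {β X : Type*} {S : Set (Equiv.Perm β)} {f : β → X}
    (h : ∀ g ∈ S, ∀ x, f (g x) = f x) {g : Equiv.Perm β} (hg : g ∈ Subgroup.closure S) :
    ∀ x, f (g x) = f x := by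
  induction hg using Subgroup.closure_induction with
  | mem g hg => exact h g hg
  | one => intro x; rfl
  | mul a b _ _ ha hb => intro x; rw [Equiv.Perm.mul_apply, ha, hb]
  | inv a _ ha => intro x; rw [← ha (a⁻¹ x), ← Equiv.Perm.mul_apply, mul_inv_cancel, Equiv.Perm.one_apply]

/-- The set of cycles of `π`, fixed points included. -/
abbrev Cycles {β : Type*} (π : Equiv.Perm β) : Type _ :=
  MulAction.orbitRel.Quotient (Subgroup.zpowers π) β

/-- The cycle of `π` through `x`. -/
def Cycles.mk {β : Type*} (π : Equiv.Perm β) (x : β) : Cycles π :=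
  Quotient.mk (MulAction.orbitRel (Subgroup.zpowers π) β) x

theorem Cycles.mk_apply {β : Type*} (π : Equiv.Perm β) (x : β) :
    Cycles.mk π (π x) = Cycles.mk π x :=
  Quotient.sound (s := MulAction.orbitRel (Subgroup.zpowers π) β)
    ⟨⟨π, Subgroup.mem_zpowers π⟩, rfl⟩

/-- The function on cycles induced by a function that is constant along `π`. -/
def Cycles.lift {β X : Type*} {π : Equiv.Perm β} (f : β → X) (h : ∀ x, f (π x) = f x) :
    Cycles π → X :=
  Quotient.lift f (by
    rintro _ y ⟨⟨g, hg⟩, rfl⟩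
    rw [Subgroup.zpowers_eq_closure] at hg
    exact eq_of_mem_closure (by rintro _ rfl; exact h) hg y)

@[simp] theorem Cycles.lift_mk {β X : Type*} {π : Equiv.Perm β} (f : β → X)
    (h : ∀ x, f (π x) = f x) (x : β) : Cycles.lift f h (Cycles.mk π x) = f x := rfl

theorem Cycles.ind {β : Type*} {π : Equiv.Perm β} {P : Cycles π → Prop}
    (h : ∀ x, P (Cycles.mk π x)) (c : Cycles π) : P c := Quotient.ind h c

theorem zc_inv {β : Type*} (π : Equiv.Perm β) : zc π⁻¹ = zc π := by
  unfold zc; rw [Subgroup.zpowers_inv]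

variable {γ : Type*}

@[simp] theorem medialSigma_false (α : Equiv.Perm γ) (i : γ) :
    medialSigma α (i, false) = (i, true) := rfl

@[simp] theorem medialSigma_true (α : Equiv.Perm γ) (i : γ) :
    medialSigma α (i, true) = (α i, false) := rfl

@[simp] theorem medialAlpha_false (σ : Equiv.Perm γ) (i : γ) :
    medialAlpha σ (i, false) = (σ⁻¹ i, true) := rfl

@[simp] theorem medialAlpha_true (σ : Equiv.Perm γ) (i : γ) :
    medialAlpha σ (i, true) = (σ i, false) := rfl

theorem medialAlpha_mul_self (σ : Equiv.Perm γ) : medialAlpha σ * medialAlpha σ = 1 := by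
  ext1 ⟨i, _ | _⟩ <;> simp

theorem zc_medialSigma (α : Equiv.Perm γ) : zc (medialSigma α) = zc α := by
  have hpm (i : γ) : Cycles.mk (medialSigma α) (i, true) = Cycles.mk (medialSigma α) (i, false) :=
    Cycles.mk_apply (medialSigma α) (i, false)
  have hα (i : γ) : Cycles.mk (medialSigma α) (α i, false) = Cycles.mk (medialSigma α) (i, false) :=
    (Cycles.mk_apply (medialSigma α) (i, true)).trans (hpm i)
  refine Nat.card_congr
    { toFun := Cycles.lift (fun p => Cycles.mk α p.1) ?_
      invFun := Cycles.lift (fun i => Cycles.mk (medialSigma α) (i, false)) hα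
      left_inv := ?_
      right_inv := ?_ }
  · rintro ⟨i, _ | _⟩
    · rfl
    · exact Cycles.mk_apply α i
  · refine Cycles.ind ?_
    rintro ⟨i, _ | _⟩
    · rfl
    · exact (hpm i).symm
  · exact Cycles.ind fun i => rfl

theorem zc_medialAlpha [Fintype γ] (σ : Equiv.Perm γ) :
    zc (medialAlpha σ) = Fintype.card γ := by
  rw [← Nat.card_eq_fintype_card]
  -- The label of a cycle is the underlying point of its unique positive element.
  refine Nat.card_congr
    { toFun := Cycles.lift (fun p => if p.2 then p.1 else σ⁻¹ p.1) ?_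
      invFun := fun i => Cycles.mk (medialAlpha σ) (i, true)
      left_inv := ?_
      right_inv := ?_ }
  · rintro ⟨i, _ | _⟩ <;> simp
  · refine Cycles.ind ?_
    rintro ⟨i, _ | _⟩
    · exact Cycles.mk_apply (medialAlpha σ) (i, false)
    · rfl
  · intro i; rfl

theorem zc_medial_faces [Finite γ] (σ α : Equiv.Perm γ) :
    zc ((medialAlpha σ)⁻¹ * medialSigma α) = zc (α⁻¹ * σ) + zc σ := by
  rw [inv_eq_of_mul_eq_one_left (medialAlpha_mul_self σ), ← zc_inv (α⁻¹ * σ), mul_inv_rev,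
    inv_inv]
  set φ := medialAlpha σ * medialSigma α with hφ
  have hm (i : γ) : φ (i, false) = (σ i, false) := by simp [hφ]
  have hp (i : γ) : φ (i, true) = ((σ⁻¹ * α) i, true) := by simp [hφ]
  unfold zc
  rw [← Nat.card_sum]
  refine Nat.card_congr
    { toFun := Cycles.lift (fun p => if p.2 then Sum.inl (Cycles.mk (σ⁻¹ * α) p.1)
        else Sum.inr (Cycles.mk σ p.1)) ?_
      invFun := Sum.elim
        (Cycles.lift (fun i => Cycles.mk φ (i, true)) fun i => by
          rw [← hp]; exact Cycles.mk_apply φ _)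
        (Cycles.lift (fun i => Cycles.mk φ (i, false)) fun i => by
          rw [← hm]; exact Cycles.mk_apply φ _)
      left_inv := ?_
      right_inv := ?_ }
  · rintro ⟨i, _ | _⟩
    · rw [hm]; exact congrArg Sum.inr (Cycles.mk_apply σ i)
    · rw [hp]; exact congrArg Sum.inl (Cycles.mk_apply (σ⁻¹ * α) i)
  · refine Cycles.ind ?_
    rintro ⟨i, _ | _⟩ <;> rfl
  · rintro (c | c)
    · induction c using Cycles.ind; rfl
    · induction c using Cycles.ind; rfl

theorem kappa_medial (σ α : Equiv.Perm γ) (htrans : kappa σ α = 1) :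
    kappa (medialSigma α) (medialAlpha σ) = 1 := by
  obtain ⟨hsub, ⟨c⟩⟩ := Nat.card_eq_one_iff_unique.1 htrans
  obtain ⟨x, -⟩ := Quotient.exists_rep c
  set G := Subgroup.closure ({medialSigma α, medialAlpha σ} : Set (Equiv.Perm (γ × Bool)))
  let orb (p : γ × Bool) : MulAction.orbitRel.Quotient G (γ × Bool) :=
    Quotient.mk (MulAction.orbitRel G (γ × Bool)) p
  have hs (p) : orb (medialSigma α p) = orb p :=
    Quotient.sound (s := MulAction.orbitRel G (γ × Bool))
      ⟨⟨_, Subgroup.subset_closure (Set.mem_insert _ _)⟩, rfl⟩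
  have ha (p) : orb (medialAlpha σ p) = orb p :=
    Quotient.sound (s := MulAction.orbitRel G (γ × Bool))
      ⟨⟨_, Subgroup.subset_closure (Set.mem_insert_of_mem _ rfl)⟩, rfl⟩
  have hpm (i : γ) : orb (i, true) = orb (i, false) := hs (i, false)
  have hinv : ∀ g ∈ ({σ, α} : Set (Equiv.Perm γ)), ∀ i, orb (g i, false) = orb (i, false) := by
    rintro _ (rfl | rfl) i
    · exact (ha (i, true)).trans (hpm i)
    · exact (hs (i, true)).trans (hpm i)
  have hconst (i : γ) : orb (i, false) = orb (x, false) := by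
    obtain ⟨⟨g, hg⟩, rfl⟩ := Quotient.exact (s := MulAction.orbitRel
      (Subgroup.closure ({σ, α} : Set (Equiv.Perm γ))) γ) (hsub.elim ⟦i⟧ ⟦x⟧)
    exact eq_of_mem_closure (f := fun j => orb (j, false)) hinv hg x
  have hall (q : MulAction.orbitRel.Quotient G (γ × Bool)) : q = orb (x, false) := by
    induction q using Quotient.ind with
    | _ p =>
      obtain ⟨i, _ | _⟩ := p
      · exact hconst i
      · exact (hpm i).trans (hconst i)
  exact Nat.card_eq_one_iff_unique.2 ⟨⟨fun a b => (hall a).trans (hall b).symm⟩, ⟨orb (x, false)⟩⟩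

end Hypermap

open Hypermap in
/-- the medial map `M(σ,α) = (σ′,α′)` of a hypermap `(σ,α)` is a
map (`α′` is a fixed-point-free involution), `(σ′,α′)` generates a transitive
group on the `2n` signed points, and its genus equals the genus of `(σ,α)`
(expressed as `2n + 2 − (z(σ′)+z(α′)+z(α′⁻¹σ′)) = n + 2 − (z(σ)+z(α)+z(α⁻¹σ))`,
both sides being twice the respective genus); in particular `z(σ′) = z(α)`,
`z(α′) = n` and `z(α′⁻¹σ′) = z(α⁻¹σ) + z(σ)`. -/
theorem medial_map_is_map_and_genus
    {γ : Type*} [Fintype γ] [DecidableEq γ] (σ α : Equiv.Perm γ)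
    (htrans : kappa σ α = 1) :
    (medialAlpha σ * medialAlpha σ = 1) ∧
    (∀ p : γ × Bool, medialAlpha σ p ≠ p) ∧
    kappa (medialSigma α) (medialAlpha σ) = 1 ∧
    zc (medialSigma α) = zc α ∧
    zc (medialAlpha σ) = Fintype.card γ ∧
    zc ((medialAlpha σ)⁻¹ * medialSigma α) = zc (α⁻¹ * σ) + zc σ ∧
    (2 * (Fintype.card γ : ℤ) + 2 -
        (zc (medialSigma α) + zc (medialAlpha σ) +
          zc ((medialAlpha σ)⁻¹ * medialSigma α)) =
      (Fintype.card γ : ℤ) + 2 - (zc σ + zc α + zc (α⁻¹ * σ))) := by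
  refine ⟨medialAlpha_mul_self σ, ?_, kappa_medial σ α htrans, zc_medialSigma α,
    zc_medialAlpha σ, zc_medial_faces σ α, ?_⟩
  · rintro ⟨i, _ | _⟩ <;> simp
  · rw [zc_medialSigma, zc_medialAlpha, zc_medial_faces]
    push_cast
    ring
end
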